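/- If the regular continued fraction expansion of the irrational α has only finitely many partial quotients equal to 1, then ρ(α) ≥ 1/(2√13 + 8) (= 1/15.211…). -/

import Mathlib

open Filter

/-- Distance from `x` to the nearest integer, `‖x‖`. -/
noncomputable def nint (x : ℝ) : ℝ := |x - round x|

/-- The two-sided inhomogeneous approximation constant
`M(α,γ) = liminf_{|n|→∞} |n|·‖nα-γ‖`. -/
noncomputable def Mval (α γ : ℝ) : ℝ :=
  Filter.liminf (fun n : ℤ => (|n| : ℝ) * nint (n * α - γ)) Filter.cofinite

/-- `ρ(α) = sup { M(α,γ) : γ ∉ ℤ + αℤ }`. -/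
noncomputable def rho (α : ℝ) : ℝ :=
  sSup {m : ℝ | ∃ γ : ℝ, (¬∃ p q : ℤ, γ = (p : ℝ) + (q : ℝ) * α) ∧ m = Mval α γ}

/-- The tails of the regular continued fraction expansion of `α`:
`t_0 = {α}`, `t_{n+1} = {1/t_n}`. -/
noncomputable def rcfT (α : ℝ) : ℕ → ℝ
  | 0 => Int.fract α
  | n + 1 => Int.fract (rcfT α n)⁻¹

/-- The regular continued fraction partial quotients `a_n = ⌊1/t_{n-1}⌋` (for `n ≥ 1`). -/
noncomputable def rcfA (α : ℝ) (n : ℕ) : ℤ := ⌊(rcfT α (n - 1))⁻¹⌋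

/-!
Write `v n = (q n, ± t n)` for the pair formed by the `n`-th denominator and its signed error
`q n * α - p n`; consecutive `v n`, `v (n + 1)` span the lattice of all `(N, N * α - m)`. After
doubling, the inhomogeneous problem asks for the minimum of `|X * Y|` on the grid of points
`i v n + j v (n + 1) + w` with `i`, `j` odd. Passing from level `n` to level `n + 1` replaces
`w` by the nearby point that restores the parity condition: `w` itself if the partial quotient is
even, `w` shifted by `± v (n + 1)` if it is odd. The shift `γ` is chosen so that the second
coordinates of all these centres stay small, which makes them a signed series of errors. The
extremal case is that all partial quotients are `3`, and the bound on the centres is exact there.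

With such centres the vertices of every cell satisfy `|X * Y| ≥ c`. If `i` and `j` have the same
sign, the point either lies on a segment between vertex-like points of two consecutive levels,
on which `X * Y` is concave, or it is described at the next level by smaller coefficients. If `i`
and `j` have opposite signs, then `|X|` is bounded by a multiple of `|Y|`, which excludes all but
finitely many `N`.
-/

/-- Four times the constant of the theorem; the factor `4` comes from doubling both coordinates
of the lattice so that the grid is described by odd coefficients. -/
noncomputable def cellConst : ℝ := 4 / (2 * √13 + 8)

lemma cellConst_quadratic : 3 * cellConst ^ 2 - 16 * cellConst + 4 = 0 := by
  have h : √13 ^ 2 = 13 := Real.sq_sqrt (by norm_num)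
  unfold cellConst
  field_simp
  linear_combination 16 * h

lemma cellConst_mem_Ioo : cellConst ∈ Set.Ioo 0.26 0.264 := by
  have hlo : 3.6 < √13 := Real.lt_sqrt_of_sq_lt (by norm_num)
  have hhi : √13 < 3.61 := (Real.sqrt_lt' (by norm_num)).2 (by norm_num)
  unfold cellConst
  constructor
  · rw [lt_div_iff₀ (by positivity)]; linarith
  · rw [div_lt_iff₀ (by positivity)]; linarith

lemma cellConst_pos : 0 < cellConst := by unfold cellConst; positivity

lemma le_mul_of_le_mul_endpoints {c x y u v r m : ℝ} (huv : 0 ≤ u * v) (hr : r ∈ Set.Icc 0 m)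
    (h₀ : c ≤ x * y) (hm : c ≤ (x + m * u) * (y - m * v)) :
    c ≤ (x + r * u) * (y - r * v) := by
  obtain ⟨hr₀, hrm⟩ := hr
  rcases hr₀.eq_or_lt with rfl | hr₀
  · simpa using h₀
  refine le_of_mul_le_mul_left ?_ (hr₀.trans_le hrm)
  calc m * c = (m - r) * c + r * c := by ring
    _ ≤ (m - r) * (x * y) + r * ((x + m * u) * (y - m * v)) := by
        gcongr
    _ = m * ((x + r * u) * (y - r * v)) - m * (r * (m - r) * (u * v)) := by ring
    _ ≤ m * ((x + r * u) * (y - r * v)) := by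
        have := hr₀.le.trans hrm
        exact sub_le_self _ (by positivity)

/-! ### Chains of convergents and the centres of their cells -/

/-- Consecutive convergents of a continued fraction with all partial quotients at least `2`:
partial quotients `a`, denominators `q`, absolute errors `t`. The number `d₀` is the first
coordinate of the centre of the cell at level `0`. -/
structure ConvergentChain where
  a : ℕ → ℤ
  q : ℕ → ℝ
  t : ℕ → ℝ
  d₀ : ℝ
  two_le_a : ∀ n, 2 ≤ a n
  q_add_two : ∀ n, q (n + 2) = a n * q (n + 1) + q n
  t_pos : ∀ n, 0 < t n
  t_eq : ∀ n, t n = a n * t (n + 1) + t (n + 2)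
  det_zero : q 1 * t 0 + q 0 * t 1 = 1
  d₀_nonneg : 0 ≤ d₀
  d₀_le : d₀ ≤ q 0
  two_mul_q_zero_add_d₀_le : 2 * q 0 + d₀ ≤ q 1

namespace ConvergentChain

variable (S : ConvergentChain) (n : ℕ)

lemma three_le_a {n : ℕ} (h : ¬Even (S.a n)) : 3 ≤ S.a n := by
  have := S.two_le_a n
  have : S.a n ≠ 2 := fun h2 => h (h2 ▸ even_two)
  omega

lemma det : S.q (n + 1) * S.t n + S.q n * S.t (n + 1) = 1 := by
  induction n with
  | zero => exact S.det_zero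
  | succ n ih =>
    rw [S.q_add_two n]
    linear_combination ih - S.q (n + 1) * S.t_eq n

lemma mul_t_succ_add_le {b : ℤ} (hb : b ≤ S.a n) :
    b * S.t (n + 1) + S.t (n + 2) ≤ S.t n := by
  rw [S.t_eq n]
  have := (S.t_pos (n + 1)).le
  gcongr

lemma two_mul_t_succ_add_le : 2 * S.t (n + 1) + S.t (n + 2) ≤ S.t n := by
  exact_mod_cast S.mul_t_succ_add_le n (S.two_le_a n)

/-- The first coordinates of the cell centres, up to sign. -/
noncomputable def d : ℕ → ℝ
  | 0 => S.d₀
  | n + 1 => if Even (S.a n) then d n else S.q (n + 1) - d n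

lemma d_bounds : 0 ≤ S.d n ∧ S.d n ≤ S.q n ∧ 2 * S.q n + S.d n ≤ S.q (n + 1) := by
  induction n with
  | zero => exact ⟨S.d₀_nonneg, S.d₀_le, S.two_mul_q_zero_add_d₀_le⟩
  | succ n ih =>
    obtain ⟨hd, hdq, hq⟩ := ih
    rw [S.q_add_two n, d]
    split_ifs with ha
    · have : (2 : ℝ) ≤ S.a n := by exact_mod_cast S.two_le_a n
      refine ⟨hd, by linarith, ?_⟩
      nlinarith
    · have : (3 : ℝ) ≤ S.a n := by exact_mod_cast S.three_le_a ha
      refine ⟨by linarith, by linarith, ?_⟩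
      nlinarith

lemma q_nonneg : 0 ≤ S.q n := (S.d_bounds n).1.trans (S.d_bounds n).2.1

/-- The change of sign of the second coordinate of the centre at an even partial quotient. -/
noncomputable def sign : ℝ := if Even (S.a n) then -1 else 1

/-- The displacement of the second coordinate of the centre at an odd partial quotient. -/
noncomputable def jump : ℝ := if Even (S.a n) then 0 else S.t (n + 1)

/-- The second coordinates of the cell centres, up to sign: the solution of
`e n = sign n * e (n + 1) - jump n` that tends to `0`. -/
noncomputable def e : ℝ := -∑' k, (∏ j ∈ Finset.range k, S.sign (n + j)) * S.jump (n + k)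

lemma jump_nonneg : 0 ≤ S.jump n := by
  unfold jump
  split_ifs
  · rfl
  · exact (S.t_pos _).le

lemma abs_sign : |S.sign n| = 1 := by
  unfold sign
  split_ifs <;> simp

lemma norm_prod_sign_mul_jump (k : ℕ) :
    ‖(∏ j ∈ Finset.range k, S.sign (n + j)) * S.jump (n + k)‖ = S.jump (n + k) := by
  rw [Real.norm_eq_abs, abs_mul, Finset.abs_prod, abs_of_nonneg (S.jump_nonneg _)]
  simp only [abs_sign, Finset.prod_const_one, one_mul]

section Supersolution

variable {S} {U : ℕ → ℝ} (hU : ∀ n, 0 ≤ U n) (hstep : ∀ n, S.jump n + U (n + 1) ≤ U n)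

include hU hstep

lemma sum_jump_le (m : ℕ) : ∑ k ∈ Finset.range m, S.jump (n + k) ≤ U n := by
  suffices h : ∑ k ∈ Finset.range m, S.jump (n + k) + U (n + m) ≤ U n from
    le_of_add_le_of_nonneg_left h (hU _)
  induction m with
  | zero => simp
  | succ m ih =>
    rw [Finset.sum_range_succ]
    have := hstep (n + m)
    rw [add_assoc n m 1] at this
    linarith

lemma summable_jump : Summable fun k => S.jump (n + k) :=
  summable_of_sum_range_le (fun _ => S.jump_nonneg _) (sum_jump_le n hU hstep)

lemma abs_e_le_of_supersolution : |S.e n| ≤ U n := by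
  rw [e, abs_neg, ← Real.norm_eq_abs]
  refine (norm_tsum_le_tsum_norm ?_).trans ?_ <;> simp only [norm_prod_sign_mul_jump]
  · exact summable_jump n hU hstep
  · exact (summable_jump n hU hstep).tsum_le_of_sum_range_le (sum_jump_le n hU hstep)

end Supersolution

/-- The bound on the second coordinates of the centres. Its two branches are what the two kinds
of vertices of a cell require. -/
noncomputable def envelope : ℝ :=
  min ((1 - cellConst) * S.t n - S.t (n + 1))
    ((1 - 3 * cellConst) * S.t n + (1 - cellConst) * S.t (n + 1))

lemma envelope_nonneg : 0 ≤ S.envelope n := by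
  obtain ⟨-, hc⟩ := cellConst_mem_Ioo
  have ht := S.t_pos n
  have ht' := S.t_pos (n + 1)
  have hle := S.two_mul_t_succ_add_le n
  have ht'' := S.t_pos (n + 2)
  refine le_min ?_ ?_
  · nlinarith
  · exact add_nonneg (mul_nonneg (by linarith) ht.le) (mul_nonneg (by linarith) ht'.le)

lemma jump_add_envelope_succ_le_of_even {n : ℕ} (ha : Even (S.a n)) :
    S.jump n + S.envelope (n + 1) ≤ S.envelope n := by
  obtain ⟨hc₀, hc₁⟩ := cellConst_mem_Ioo
  have ht := S.t_pos n
  have ht' := S.t_pos (n + 1)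
  have ht'' := S.t_pos (n + 2)
  rw [jump, if_pos ha, zero_add]
  refine le_min ((min_le_right _ _).trans ?_) ((min_le_left _ _).trans ?_)
  · have := mul_le_mul_of_nonneg_left (S.two_mul_t_succ_add_le n)
      (by linarith : 0 ≤ 1 - cellConst)
    nlinarith
  · have := mul_nonneg (by linarith : 0 ≤ 1 - 3 * cellConst) ht.le
    linarith

lemma t_succ_add_envelope_succ_le_left {n : ℕ} (ha : 3 ≤ S.a n) :
    S.t (n + 1) + S.envelope (n + 1) ≤ (1 - cellConst) * S.t n - S.t (n + 1) := by
  obtain ⟨-, hc⟩ := cellConst_mem_Ioo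
  have := mul_le_mul_of_nonneg_left (S.mul_t_succ_add_le n ha) (by linarith : 0 ≤ 1 - cellConst)
  have : S.envelope (n + 1) ≤ _ := min_le_right _ _
  push_cast at *
  linarith

/-- For the partial quotient `3` the proof rests on `(2 - 3c)(2 - c) = 8c`: the two branches agree
at the same ratio `t (n + 1) / t n` at which the left branch reproduces the right one. -/
lemma t_succ_add_envelope_succ_le_right {n : ℕ} (ha : ¬Even (S.a n)) :
    S.t (n + 1) + S.envelope (n + 1) ≤
      (1 - 3 * cellConst) * S.t n + (1 - cellConst) * S.t (n + 1) := by
  obtain ⟨hc₀, hc₁⟩ := cellConst_mem_Ioo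
  have ht' := S.t_pos (n + 1)
  have ht'' := S.t_pos (n + 2)
  have hleft : S.envelope (n + 1) ≤ (1 - cellConst) * S.t (n + 1) - S.t (n + 2) :=
    min_le_left _ _
  obtain h3 | h5 : S.a n = 3 ∨ 5 ≤ S.a n := by
    have := S.three_le_a ha
    have : S.a n ≠ 4 := fun h4 => ha (h4 ▸ (by decide))
    omega
  · have ht := S.t_eq n
    rw [h3] at ht
    push_cast at ht
    rcases le_total (4 * S.t (n + 1)) ((2 - 3 * cellConst) * S.t n) with h | h
    · linarith
    · refine (S.t_succ_add_envelope_succ_le_left h3.ge).trans ?_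
      have := mul_le_mul_of_nonneg_left h (by linarith : 0 ≤ 2 - cellConst)
      linear_combination this / 4 - S.t n / 4 * cellConst_quadratic
  · have := mul_le_mul_of_nonneg_left (S.mul_t_succ_add_le n h5)
      (by linarith : 0 ≤ 1 - 3 * cellConst)
    push_cast at this
    nlinarith

lemma jump_add_envelope_succ_le : S.jump n + S.envelope (n + 1) ≤ S.envelope n := by
  by_cases ha : Even (S.a n)
  · exact S.jump_add_envelope_succ_le_of_even ha
  · rw [jump, if_neg ha]
    exact le_min (S.t_succ_add_envelope_succ_le_left (S.three_le_a ha))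
      (S.t_succ_add_envelope_succ_le_right ha)

lemma abs_e_le_envelope : |S.e n| ≤ S.envelope n :=
  abs_e_le_of_supersolution n S.envelope_nonneg S.jump_add_envelope_succ_le

lemma e_eq : S.e n = S.sign n * S.e (n + 1) - S.jump n := by
  have hsum : Summable fun k => (∏ j ∈ Finset.range k, S.sign (n + j)) * S.jump (n + k) := by
    refine Summable.of_norm ?_
    simp only [norm_prod_sign_mul_jump]
    exact summable_jump n S.envelope_nonneg S.jump_add_envelope_succ_le
  rw [e, e, hsum.tsum_eq_zero_add]
  simp only [Finset.prod_range_succ', Finset.prod_range_zero, one_mul, add_zero, mul_neg,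
    ← tsum_mul_left, neg_add_rev, sub_eq_add_neg]
  congr 2
  refine tsum_congr fun k => ?_
  simp only [add_right_comm n _ 1, ← add_assoc]
  ring

lemma e_eq_of_even {n : ℕ} (ha : Even (S.a n)) : S.e n = -S.e (n + 1) := by
  simp [S.e_eq n, sign, jump, ha]

lemma e_eq_of_not_even {n : ℕ} (ha : ¬Even (S.a n)) : S.e n = S.e (n + 1) - S.t (n + 1) := by
  simp [S.e_eq n, sign, jump, ha]

lemma abs_e_le_left : |S.e n| ≤ (1 - cellConst) * S.t n - S.t (n + 1) :=
  (S.abs_e_le_envelope n).trans (min_le_left _ _)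

lemma abs_e_le_right :
    |S.e n| ≤ (1 - 3 * cellConst) * S.t n + (1 - cellConst) * S.t (n + 1) :=
  (S.abs_e_le_envelope n).trans (min_le_right _ _)

lemma e_le : S.e n ≤ 2 / 3 * S.t n - S.t (n + 1) := by
  obtain ⟨hc₀, -⟩ := cellConst_mem_Ioo
  have ht'' := S.t_pos (n + 2)
  have hle := S.two_mul_t_succ_add_le n
  have hle' := S.two_mul_t_succ_add_le (n + 1)
  have hright := abs_le.1 (S.abs_e_le_right (n + 1))
  by_cases ha : Even (S.a n)
  · rw [S.e_eq_of_even ha]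
    nlinarith [S.t_pos (n + 3)]
  · rw [S.e_eq_of_not_even ha]
    nlinarith [S.t_pos (n + 3)]

lemma exists_ratio_bounds :
    ∃ C, 2 * S.q n ≤ C * (cellConst * S.t n) ∧ S.q (n + 1) ≤ C * S.t (n + 1) := by
  have ht := mul_pos cellConst_pos (S.t_pos n)
  have ht' := S.t_pos (n + 1)
  refine ⟨max (2 * S.q n / (cellConst * S.t n)) (S.q (n + 1) / S.t (n + 1)), ?_, ?_⟩
  · exact (div_le_iff₀ ht).1 (le_max_left _ _)
  · exact (div_le_iff₀ ht').1 (le_max_right _ _)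

/-- The two possible centres of the cell at level `n`, which differ by a reflection. -/
def IsCentre (D E : ℝ) : Prop := D = S.d n ∧ E = S.e n ∨ D = -S.d n ∧ E = -S.e n

lemma isCentre_d_e : S.IsCentre n (S.d n) (S.e n) := Or.inl ⟨rfl, rfl⟩

variable {S} {n} {D E : ℝ}

/-! ### The product of the coordinates on the grid -/

namespace IsCentre

lemma abs_fst_le (h : S.IsCentre n D E) : |D| ≤ S.d n := by
  rcases h with ⟨rfl, -⟩ | ⟨rfl, -⟩ <;> simp [abs_of_nonneg (S.d_bounds n).1]

lemma abs_snd_le (h : S.IsCentre n D E) : |E| ≤ |S.e n| := by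
  rcases h with ⟨-, rfl⟩ | ⟨-, rfl⟩ <;> simp

lemma succ (h : S.IsCentre n D E) :
    ∃ s : ℤ, Even (S.a n - s) ∧ |s| + 2 ≤ S.a n ∧
      S.IsCentre (n + 1) (D - s * S.q (n + 1)) (-(E + s * S.t (n + 1))) := by
  by_cases ha : Even (S.a n)
  · refine ⟨0, by simpa using ha, by simpa using S.two_le_a n, ?_⟩
    have hd : S.d (n + 1) = S.d n := if_pos ha
    rcases h with ⟨rfl, rfl⟩ | ⟨rfl, rfl⟩
    · left; simp [hd, S.e_eq_of_even ha]
    · right; simp [hd, S.e_eq_of_even ha]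
  · have ha' := Int.not_even_iff_odd.1 ha
    have hd : S.d (n + 1) = S.q (n + 1) - S.d n := if_neg ha
    have he := S.e_eq_of_not_even ha
    rcases h with ⟨rfl, rfl⟩ | ⟨rfl, rfl⟩
    · refine ⟨1, ha'.sub_odd odd_one, S.three_le_a ha, Or.inr ⟨?_, ?_⟩⟩
      · rw [hd]; push_cast; ring
      · rw [he]; push_cast; ring
    · refine ⟨-1, ha'.sub_odd (by decide), by simpa using S.three_le_a ha, Or.inl ⟨?_, ?_⟩⟩
      · rw [hd]; push_cast; ring
      · rw [he]; push_cast; ring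

lemma q_le_fst (h : S.IsCentre n D E) : S.q n ≤ S.q (n + 1) - S.q n + D := by
  have := abs_le.1 h.abs_fst_le
  linarith [S.d_bounds n]

lemma abs_snd_le_sub (h : S.IsCentre n D E) : |E| ≤ S.t n - S.t (n + 1) := by
  have := mul_nonneg cellConst_pos.le (S.t_pos n).le
  linarith [h.abs_snd_le, S.abs_e_le_left n]

lemma cellConst_le_sub (h : S.IsCentre n D E) :
    cellConst ≤ (S.q (n + 1) - S.q n + D) * (S.t n + S.t (n + 1) - E) := by
  have hc := cellConst_pos
  have ht := S.t_pos n
  have ht' := S.t_pos (n + 1)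
  have hq := S.q_nonneg n
  have hX := h.q_le_fst
  have hX3 : S.q (n + 1) ≤ 3 * (S.q (n + 1) - S.q n + D) := by
    have := abs_le.1 h.abs_fst_le
    linarith [S.d_bounds n]
  calc cellConst = cellConst * (S.q (n + 1) * S.t n + S.q n * S.t (n + 1)) := by
        rw [S.det n, mul_one]
    _ ≤ cellConst * (3 * (S.q (n + 1) - S.q n + D) * S.t n
          + (S.q (n + 1) - S.q n + D) * S.t (n + 1)) := by gcongr
    _ = (S.q (n + 1) - S.q n + D) * (cellConst * (3 * S.t n + S.t (n + 1))) := by ring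
    _ ≤ (S.q (n + 1) - S.q n + D) * (S.t n + S.t (n + 1) - E) := by
        refine mul_le_mul_of_nonneg_left ?_ (hq.trans hX)
        linarith [(abs_le.1 h.abs_snd_le).2, S.abs_e_le_right n]

lemma cellConst_le_add (h : S.IsCentre n D E) :
    cellConst ≤ (S.q n + S.q (n + 1) + D) * (S.t n - S.t (n + 1) + E) := by
  obtain ⟨-, hc⟩ := cellConst_mem_Ioo
  have hc₀ := cellConst_pos
  have ht := S.t_pos n
  have ht' := S.t_pos (n + 1)
  have ht'' := S.t_pos (n + 2)
  have hle := S.two_mul_t_succ_add_le n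
  have hq := S.q_nonneg n
  obtain ⟨hd, hdq, hqq⟩ := S.d_bounds n
  have hdet := S.det n
  rcases h with ⟨rfl, rfl⟩ | ⟨rfl, rfl⟩
  · calc cellConst = cellConst * (S.q (n + 1) * S.t n + S.q n * S.t (n + 1)) := by
          rw [hdet, mul_one]
      _ ≤ cellConst * (S.q (n + 1) * S.t n + S.q n * S.t n) := by gcongr; linarith
      _ = (S.q n + S.q (n + 1)) * (cellConst * S.t n) := by ring
      _ ≤ (S.q n + S.q (n + 1) + S.d n) * (S.t n - S.t (n + 1) + S.e n) := by
          refine mul_le_mul (by linarith) ?_ (by positivity) (by linarith)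
          linarith [neg_abs_le (S.e n), S.abs_e_le_left n]
  · have hsmall : S.q n * S.t (n + 1) ≤ (S.q (n + 1) / 2) * (S.t n / 2) := by
      gcongr <;> linarith
    calc cellConst ≤ S.q (n + 1) * (S.t n / 3) := by linarith
      _ ≤ (S.q n + S.q (n + 1) + -S.d n) * (S.t n - S.t (n + 1) + -S.e n) := by
          refine mul_le_mul (by linarith) ?_ (by positivity) (by linarith)
          linarith [S.e_le n]

lemma cellConst_le_add_of_one_le (h : S.IsCentre n D E) {i : ℝ} (hi : 1 ≤ i) :
    cellConst ≤ (i * S.q n + S.q (n + 1) + D) * (i * S.t n - S.t (n + 1) + E) := by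
  have hq := le_mul_of_one_le_left (S.q_nonneg n) hi
  have ht := le_mul_of_one_le_left (S.t_pos n).le hi
  have hX := h.q_le_fst
  have hY := abs_le.1 h.abs_snd_le_sub
  refine h.cellConst_le_add.trans (mul_le_mul ?_ ?_ ?_ ?_) <;> linarith [S.q_nonneg n]

lemma cellConst_le_sub_of_one_le (h : S.IsCentre n D E) {i : ℝ} (hi : 1 ≤ i) :
    cellConst ≤ (i * S.q (n + 1) - S.q n + D) * (S.t n + i * S.t (n + 1) - E) := by
  have hq := le_mul_of_one_le_left (S.q_nonneg (n + 1)) hi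
  have ht := le_mul_of_one_le_left (S.t_pos (n + 1)).le hi
  have hX := h.q_le_fst
  have hY := abs_le.1 h.abs_snd_le_sub
  refine h.cellConst_le_sub.trans (mul_le_mul ?_ ?_ ?_ ?_) <;>
    linarith [S.q_nonneg n, S.t_pos (n + 1)]

/-- The upper end of the range of `j` is a boundary point of the cell at level `n + 1`, and the
product of the coordinates is concave in `j`. -/
lemma cellConst_le_of_le (h : S.IsCentre n D E) {s i j : ℝ}
    (h' : S.IsCentre (n + 1) (D - s * S.q (n + 1)) (-(E + s * S.t (n + 1))))
    (hi : 1 ≤ i) (hj : 1 ≤ j) (hij : j ≤ S.a n * i - s - 1) :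
    cellConst ≤ (i * S.q n + j * S.q (n + 1) + D) * (i * S.t n - j * S.t (n + 1) + E) := by
  have hend := h'.cellConst_le_sub_of_one_le hi
  rw [S.q_add_two n, ← sub_eq_iff_eq_add'.2 (S.t_eq n)] at hend
  have := le_mul_of_le_mul_endpoints (m := S.a n * i - s - 2) (r := j - 1)
    (mul_nonneg (S.q_nonneg (n + 1)) (S.t_pos (n + 1)).le) ⟨by linarith, by linarith⟩
    (h.cellConst_le_add_of_one_le hi) (by convert hend using 1; ring)
  convert this using 1
  ring

/-- A grid point with positive coefficients beyond the reach of the cells of levels `n` and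
`n + 1` has the positive coefficients `j - a n * i + s` and `i` at level `n + 1`, and `i < j`. -/
theorem cellConst_le_abs {n : ℕ} {D E : ℝ} (h : S.IsCentre n D E) {i j : ℤ}
    (hi : 1 ≤ i) (hj : 1 ≤ j) (oi : Odd i) (oj : Odd j) :
    cellConst ≤ |(i * S.q n + j * S.q (n + 1) + D) * (i * S.t n - j * S.t (n + 1) + E)| := by
  obtain ⟨s, hs, hsa, h'⟩ := h.succ
  have ho : Odd (j - S.a n * i + s) := by
    have : Odd (j - (S.a n - s) * i - s * (i - 1)) :=
      (oj.sub_even (hs.mul_right i)).sub_even ((oi.sub_odd odd_one).mul_left s)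
    convert this using 1
    ring
  have : i < S.a n * i - s := by nlinarith [le_abs_self s, abs_nonneg s]
  rcases le_or_gt j (S.a n * i - s - 1) with hle | hgt
  · refine (h.cellConst_le_of_le h' ?_ ?_ ?_).trans (le_abs_self _) <;> exact_mod_cast ‹_›
  · have hi' : 1 ≤ j - S.a n * i + s := by
      obtain ⟨k, hk⟩ := ho
      omega
    refine (h'.cellConst_le_abs hi' hi ho oi).trans_eq ?_
    rw [S.q_add_two n, S.t_eq n, ← abs_neg]
    push_cast
    ring_nf
termination_by j.toNat
decreasing_by omega

lemma mul_sub_mul_le_snd (h : S.IsCentre n D E) {i : ℝ} (hi : 1 ≤ i) (j : ℝ) :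
    i * (cellConst * S.t n) - j * S.t (n + 1) ≤ i * S.t n - j * S.t (n + 1) + E := by
  have hc : 0 ≤ 1 - cellConst := by linarith [cellConst_mem_Ioo.2]
  have := le_mul_of_one_le_left (mul_nonneg hc (S.t_pos n).le) hi
  linarith [(abs_le.1 h.abs_snd_le).1, S.abs_e_le_left n, S.t_pos (n + 1)]

lemma abs_fst_le_mul_snd (h : S.IsCentre n D E) {i j C : ℝ} (hi : 1 ≤ i) (hj : j ≤ 0)
    (hC : 2 * S.q n ≤ C * (cellConst * S.t n)) (hC' : S.q (n + 1) ≤ C * S.t (n + 1)) :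
    |i * S.q n + j * S.q (n + 1) + D| ≤ C * (i * S.t n - j * S.t (n + 1) + E) := by
  have hC₀ : 0 ≤ C := nonneg_of_mul_nonneg_left ((S.q_nonneg _).trans hC') (S.t_pos _)
  have hD := abs_le.1 h.abs_fst_le
  have hdq := (S.d_bounds n).2.1
  have hq := le_mul_of_one_le_left (S.q_nonneg n) hi
  have hq' := mul_nonneg (neg_nonneg.2 hj) (S.q_nonneg (n + 1))
  calc |i * S.q n + j * S.q (n + 1) + D| ≤ i * (2 * S.q n) + -j * S.q (n + 1) := by
        rw [abs_le]
        constructor <;> linarith [S.q_nonneg n]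
    _ ≤ i * (C * (cellConst * S.t n)) + -j * (C * S.t (n + 1)) := by
        have := neg_nonneg.2 hj
        gcongr
    _ = C * (i * (cellConst * S.t n) - j * S.t (n + 1)) := by ring
    _ ≤ C * (i * S.t n - j * S.t (n + 1) + E) :=
        mul_le_mul_of_nonneg_left (h.mul_sub_mul_le_snd hi j) hC₀

lemma neg (h : S.IsCentre n D E) : S.IsCentre n (-D) (-E) := by
  rcases h with ⟨rfl, rfl⟩ | ⟨rfl, rfl⟩
  · exact Or.inr ⟨rfl, rfl⟩
  · exact Or.inl ⟨neg_neg _, neg_neg _⟩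

theorem cellConst_le_or_abs_le_mul (h : S.IsCentre n D E) {C : ℝ}
    (hC : 2 * S.q n ≤ C * (cellConst * S.t n)) (hC' : S.q (n + 1) ≤ C * S.t (n + 1))
    {i j : ℤ} (oi : Odd i) (oj : Odd j) :
    cellConst ≤ |(i * S.q n + j * S.q (n + 1) + D) * (i * S.t n - j * S.t (n + 1) + E)| ∨
      i * S.t n - j * S.t (n + 1) + E ≠ 0 ∧
        |i * S.q n + j * S.q (n + 1) + D| ≤ C * |i * S.t n - j * S.t (n + 1) + E| := by
  have hi₀ : i ≠ 0 := by rintro rfl; simp at oi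
  have hj₀ : j ≠ 0 := by rintro rfl; simp at oj
  wlog hi : 1 ≤ i generalizing i j D E
  · have := this h.neg oi.neg oj.neg (neg_ne_zero.2 hi₀) (neg_ne_zero.2 hj₀) (by omega)
    push_cast at this
    rw [show -(i : ℝ) * S.q n + -j * S.q (n + 1) + -D = -(i * S.q n + j * S.q (n + 1) + D) by ring,
      show -(i : ℝ) * S.t n - -j * S.t (n + 1) + -E = -(i * S.t n - j * S.t (n + 1) + E) by ring,
      neg_mul_neg, abs_neg, abs_neg, neg_ne_zero] at this
    exact this
  rcases lt_or_gt_of_ne hj₀ with hj | hj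
  · right
    have hi' : (1 : ℝ) ≤ i := by exact_mod_cast hi
    have hj' : (j : ℝ) < 0 := by exact_mod_cast hj
    have hpos : 0 < i * (cellConst * S.t n) - j * S.t (n + 1) := by
      have hn := mul_pos cellConst_pos (S.t_pos n)
      exact sub_pos.2 ((mul_neg_of_neg_of_pos hj' (S.t_pos (n + 1))).trans (by positivity))
    have hY := hpos.trans_le (h.mul_sub_mul_le_snd hi' j)
    rw [abs_of_pos hY]
    exact ⟨hY.ne', h.abs_fst_le_mul_snd hi' hj'.le hC hC'⟩
  · exact Or.inl (h.cellConst_le_abs hi hj oi oj)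

end IsCentre

end ConvergentChain

/-! ### The continued fraction of an irrational number -/

section ContinuedFraction

variable {α : ℝ}

lemma irrational_rcfT (hα : Irrational α) (n : ℕ) : Irrational (rcfT α n) := by
  induction n with
  | zero => exact hα.sub_intCast ⌊α⌋
  | succ n ih => exact ih.inv.sub_intCast ⌊(rcfT α n)⁻¹⌋

lemma rcfT_lt_one (α : ℝ) (n : ℕ) : rcfT α n < 1 := by
  cases n <;> exact Int.fract_lt_one _

lemma rcfT_pos (hα : Irrational α) (n : ℕ) : 0 < rcfT α n := by
  refine lt_of_le_of_ne ?_ (irrational_rcfT hα n).ne_zero.symm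
  cases n <;> exact Int.fract_nonneg _

lemma rcfT_mul_rcfA_add_rcfT (hα : Irrational α) (n : ℕ) :
    rcfT α n * (rcfA α (n + 1) + rcfT α (n + 1)) = 1 := by
  calc rcfT α n * (rcfA α (n + 1) + rcfT α (n + 1)) = rcfT α n * (rcfT α n)⁻¹ :=
        congrArg _ (Int.floor_add_fract _)
    _ = 1 := mul_inv_cancel₀ (rcfT_pos hα n).ne'

lemma one_le_rcfA_succ (hα : Irrational α) (n : ℕ) : 1 ≤ rcfA α (n + 1) :=
  Int.le_floor.2 <| by
    exact_mod_cast (one_le_inv₀ (rcfT_pos hα n)).2 (rcfT_lt_one α n).le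

/-- The denominators of the convergents of `α`, shifted by one: `rcfDen α n = q_{n-1}`, with
`q_{-1} = 0`. -/
noncomputable def rcfDen (α : ℝ) : ℕ → ℤ
  | 0 => 0
  | 1 => 1
  | n + 2 => rcfA α (n + 1) * rcfDen α (n + 1) + rcfDen α n

/-- The errors of the convergents of `α`, with the index shift of `rcfDen`:
`rcfErr α n = |q_{n-1} α - p_{n-1}|`. -/
noncomputable def rcfErr (α : ℝ) (n : ℕ) : ℝ := ∏ i ∈ Finset.range n, rcfT α i

lemma rcfErr_pos (hα : Irrational α) (n : ℕ) : 0 < rcfErr α n :=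
  Finset.prod_pos fun i _ => rcfT_pos hα i

lemma rcfErr_eq (hα : Irrational α) (n : ℕ) :
    rcfErr α n = rcfA α (n + 1) * rcfErr α (n + 1) + rcfErr α (n + 2) := by
  simp only [rcfErr, Finset.prod_range_succ]
  linear_combination -(∏ i ∈ Finset.range n, rcfT α i) * rcfT_mul_rcfA_add_rcfT hα n

lemma rcfErr_succ_le (hα : Irrational α) (n : ℕ) : rcfErr α (n + 1) ≤ rcfErr α n := by
  rw [rcfErr, Finset.prod_range_succ]
  exact mul_le_of_le_one_right (rcfErr_pos hα n).le (rcfT_lt_one α n).le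

lemma rcfDen_succ_mul_rcfErr_add (hα : Irrational α) (n : ℕ) :
    rcfDen α (n + 1) * rcfErr α n + rcfDen α n * rcfErr α (n + 1) = 1 := by
  induction n with
  | zero => simp [rcfDen, rcfErr]
  | succ n ih =>
    rw [rcfDen]
    push_cast
    linear_combination ih - rcfDen α (n + 1) * rcfErr_eq hα n

lemma rcfDen_bounds (hα : Irrational α) (n : ℕ) :
    0 ≤ rcfDen α n ∧ rcfDen α n ≤ rcfDen α (n + 1) ∧ 1 ≤ rcfDen α (n + 1) := by
  induction n with
  | zero => simp [rcfDen]
  | succ n ih =>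
    have := one_le_rcfA_succ hα n
    rw [rcfDen]
    refine ⟨?_, ?_, ?_⟩ <;> nlinarith

lemma le_rcfDen_succ (hα : Irrational α) (n : ℕ) : n ≤ rcfDen α (n + 1) := by
  induction n with
  | zero => simp [rcfDen]
  | succ n ih =>
    rcases n with _ | n
    · simpa using (rcfDen_bounds hα 1).2.2
    · have hA := one_le_rcfA_succ hα (n + 1)
      have hden := (rcfDen_bounds hα n).2.2
      rw [rcfDen]
      push_cast at ih ⊢
      nlinarith

lemma exists_rcf_coords (hα : Irrational α) (n : ℕ) (N m : ℤ) :
    ∃ i j : ℤ, N = i * rcfDen α n + j * rcfDen α (n + 1) ∧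
      N * α - m = (-1) ^ n * (j * rcfErr α (n + 1) - i * rcfErr α n) := by
  induction n with
  | zero =>
    refine ⟨m - N * ⌊α⌋, N, by simp [rcfDen], ?_⟩
    simp only [rcfErr, rcfT, Int.fract, zero_add, Finset.prod_range_one,
      Finset.prod_range_zero]
    push_cast
    ring
  | succ n ih =>
    obtain ⟨i, j, hN, hm⟩ := ih
    refine ⟨j - rcfA α (n + 1) * i, i, ?_, ?_⟩
    · rw [hN, rcfDen]
      ring
    · rw [hm, rcfErr_eq hα n]
      push_cast
      ring

lemma exists_int_of_rcf_coords (hα : Irrational α) (n : ℕ) (i j : ℤ) :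
    ∃ m : ℤ, ((i * rcfDen α n + j * rcfDen α (n + 1) : ℤ) : ℝ) * α - m =
      (-1) ^ n * (j * rcfErr α (n + 1) - i * rcfErr α n) := by
  induction n generalizing i j with
  | zero =>
    refine ⟨i + j * ⌊α⌋, ?_⟩
    simp only [rcfDen, rcfErr, rcfT, Int.fract, zero_add, Finset.prod_range_one,
      Finset.prod_range_zero]
    push_cast
    ring
  | succ n ih =>
    obtain ⟨m, hm⟩ := ih j (i + rcfA α (n + 1) * j)
    refine ⟨m, ?_⟩
    rw [rcfErr_eq hα n] at hm
    rw [rcfDen]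
    push_cast at hm ⊢
    linear_combination hm

end ContinuedFraction

section Mval

variable {α γ : ℝ}

lemma exists_int_coords_near {q q' t t' : ℝ} (hq : 0 ≤ q) (hq' : 0 ≤ q') (ht : 0 ≤ t)
    (ht' : 0 ≤ t') (hdet : q' * t + q * t' = 1) (X Y : ℝ) :
    ∃ i j : ℤ, |i * q + j * q' - X| ≤ (q + q') / 2 ∧ |i * t - j * t' - Y| ≤ (t + t') / 2 := by
  obtain ⟨hx₁, hx₂⟩ := abs_le.1 (abs_sub_round (t' * X + q' * Y))
  obtain ⟨hy₁, hy₂⟩ := abs_le.1 (abs_sub_round (t * X - q * Y))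
  set i := round (t' * X + q' * Y)
  set j := round (t * X - q * Y)
  have hX : X = (t' * X + q' * Y) * q + (t * X - q * Y) * q' := by linear_combination -X * hdet
  have hY : Y = (t' * X + q' * Y) * t - (t * X - q * Y) * t' := by linear_combination -Y * hdet
  refine ⟨i, j, abs_le.2 ⟨?_, ?_⟩, abs_le.2 ⟨?_, ?_⟩⟩ <;> nlinarith

/-- The point is found near the one with first coordinate `2 * rcfDen α (n + 1)`, at a distance
of at most `rcfDen α (n + 1)`. -/
lemma exists_mul_abs_sub_le (hα : Irrational α) (γ : ℝ) (n : ℕ) :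
    ∃ N m : ℤ, n ≤ N ∧ N * |N * α - γ - m| ≤ 3 := by
  have hdet := rcfDen_succ_mul_rcfErr_add hα n
  have hn : (n : ℝ) ≤ rcfDen α (n + 1) := by exact_mod_cast le_rcfDen_succ hα n
  have hq : (0 : ℝ) ≤ rcfDen α n := by exact_mod_cast (rcfDen_bounds hα n).1
  have hqq' : (rcfDen α n : ℝ) ≤ rcfDen α (n + 1) := by exact_mod_cast (rcfDen_bounds hα n).2.1
  have ht := (rcfErr_pos hα n).le
  have ht' := (rcfErr_pos hα (n + 1)).le
  obtain ⟨i, j, hN, hZ⟩ := exists_int_coords_near hq (hq.trans hqq') ht ht' hdet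
    (2 * rcfDen α (n + 1)) (-((-1) ^ n * γ))
  obtain ⟨m, hm⟩ := exists_int_of_rcf_coords hα n i j
  set N := i * rcfDen α n + j * rcfDen α (n + 1) with hN_def
  have hN_cast : (N : ℝ) = i * rcfDen α n + j * rcfDen α (n + 1) := by rw [hN_def]; norm_cast
  rw [← hN_cast] at hN
  obtain ⟨hN₁, hN₂⟩ := abs_le.1 hN
  have hZ_eq : N * α - γ - m =
      -((-1) ^ n * (i * rcfErr α n - j * rcfErr α (n + 1) - -((-1) ^ n * γ))) := by
    have hsign : ((-1) ^ n * (-1) ^ n : ℝ) = 1 := pow_mul_pow_eq_one n (by norm_num)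
    linear_combination hm + γ * hsign
  have hZ_le : |N * α - γ - m| ≤ rcfErr α n := by
    rw [hZ_eq, abs_neg, abs_mul, abs_neg_one_pow, one_mul]
    linarith [rcfErr_succ_le hα n]
  refine ⟨N, m, by exact_mod_cast (by linarith : (n : ℝ) ≤ N), ?_⟩
  calc N * |N * α - γ - m| ≤ 3 * rcfDen α (n + 1) * rcfErr α n :=
        mul_le_mul (by linarith) hZ_le (abs_nonneg _) (by linarith)
    _ ≤ 3 := by nlinarith

lemma nint_le (x : ℝ) (m : ℤ) : nint x ≤ |x - m| := round_le x m

lemma frequently_mul_nint_le (hα : Irrational α) (γ : ℝ) :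
    ∃ᶠ n : ℤ in cofinite, |(n : ℝ)| * nint (n * α - γ) ≤ 3 := by
  rw [frequently_cofinite_iff_infinite]
  refine Set.infinite_of_forall_exists_gt fun N₀ => ?_
  obtain ⟨N, m, hN, hle⟩ := exists_mul_abs_sub_le hα γ (N₀.toNat + 1)
  have hpos : (0 : ℝ) ≤ N := by exact_mod_cast (by omega : 0 ≤ N)
  have hnint : |(N : ℝ)| * nint (N * α - γ) ≤ 3 := by
    rw [abs_of_nonneg hpos]
    exact (mul_le_mul_of_nonneg_left (nint_le _ m) hpos).trans hle
  exact ⟨N, hnint, by omega⟩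

lemma Mval_le (hα : Irrational α) (γ : ℝ) : Mval α γ ≤ 3 :=
  liminf_le_of_frequently_le (frequently_mul_nint_le hα γ)
    (isBoundedUnder_of ⟨0, fun _ => mul_nonneg (abs_nonneg _) (abs_nonneg _)⟩)

lemma le_Mval {κ C : ℝ} (hα : Irrational α)
    (h : ∀ N m : ℤ, κ ≤ |N * (N * α - γ - m)| ∨ |(N : ℝ)| ≤ C * |N * α - γ - m|) :
    κ ≤ Mval α γ := by
  refine le_liminf_of_le (IsCoboundedUnder.of_frequently_le (frequently_mul_nint_le hα γ)) ?_
  filter_upwards [(tendsto_norm_cocompact_atTop.comp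
    Int.tendsto_coe_cofinite).eventually_gt_atTop |C|] with N hN
  have hround : |(N * α - γ) - round (N * α - γ)| ≤ 1 := by
    linarith [abs_sub_round (N * α - γ)]
  rcases h N (round (N * α - γ)) with hκ | hC
  · rwa [abs_mul] at hκ
  · refine absurd hN (not_lt.2 (hC.trans ?_))
    exact (mul_le_mul_of_nonneg_right (le_abs_self C) (abs_nonneg _)).trans
      (mul_le_of_le_one_right (abs_nonneg C) hround)

end Mval

section Shift

variable {α : ℝ}

/-- The convergents of `α` from index `k + 2` on, as a chain; `d₀` is chosen in `{0, 1}` so that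
`q 0 + q 1 + d₀` is even. -/
noncomputable def rcfChain (hα : Irrational α) {k : ℕ} (hk : ∀ n ≥ k, rcfA α n ≠ 1) :
    ConvergentChain where
  a n := rcfA α (k + 2 + n + 1)
  q n := rcfDen α (k + 2 + n)
  t n := rcfErr α (k + 2 + n)
  d₀ := ((rcfDen α (k + 2) + rcfDen α (k + 3)) % 2 : ℤ)
  two_le_a n := by
    have := one_le_rcfA_succ hα (k + 2 + n)
    have := hk (k + 2 + n + 1) (by omega)
    omega
  q_add_two n := by
    rw [← Int.cast_mul, ← Int.cast_add]
    rfl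
  t_pos n := rcfErr_pos hα _
  t_eq n := rcfErr_eq hα _
  det_zero := rcfDen_succ_mul_rcfErr_add hα _
  d₀_nonneg := by exact_mod_cast Int.emod_nonneg _ two_ne_zero
  d₀_le := by
    have : 1 ≤ rcfDen α (k + 2) := (rcfDen_bounds hα (k + 1)).2.2
    exact_mod_cast (by omega : (rcfDen α (k + 2) + rcfDen α (k + 3)) % 2 ≤ rcfDen α (k + 2))
  two_mul_q_zero_add_d₀_le := by
    have hA : 2 ≤ rcfA α (k + 2) := by
      have : 1 ≤ rcfA α (k + 2) := one_le_rcfA_succ hα (k + 1)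
      have := hk (k + 2) (by omega)
      omega
    have hq : 1 ≤ rcfDen α (k + 1) := (rcfDen_bounds hα k).2.2
    have hmul := mul_le_mul_of_nonneg_right hA (rcfDen_bounds hα (k + 2)).1
    have hrec : rcfDen α (k + 3) = rcfA α (k + 2) * rcfDen α (k + 2) + rcfDen α (k + 1) := rfl
    exact_mod_cast (by omega : 2 * rcfDen α (k + 2) +
      (rcfDen α (k + 2) + rcfDen α (k + 3)) % 2 ≤ rcfDen α (k + 3))

lemma exists_two_mul_eq_rcfChain (hα : Irrational α) {k : ℕ} (hk : ∀ n ≥ k, rcfA α n ≠ 1) :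
    ∃ r : ℤ, (2 * r : ℝ) =
      (rcfChain hα hk).q 0 + (rcfChain hα hk).q 1 + (rcfChain hα hk).d 0 := by
  refine ⟨(rcfDen α (k + 2) + rcfDen α (k + 3) + 1) / 2, ?_⟩
  have h : 2 * ((rcfDen α (k + 2) + rcfDen α (k + 3) + 1) / 2) = rcfDen α (k + 2) +
      rcfDen α (k + 3) + (rcfDen α (k + 2) + rcfDen α (k + 3)) % 2 := by omega
  have hcast := congrArg (Int.cast (R := ℝ)) h
  push_cast at hcast
  exact hcast

lemma exists_rcfChain_coords (hα : Irrational α) {k : ℕ} (hk : ∀ n ≥ k, rcfA α n ≠ 1) (N m : ℤ) :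
    ∃ i j : ℤ, (N : ℝ) = i * (rcfChain hα hk).q 0 + j * (rcfChain hα hk).q 1 ∧
      N * α - m = (-1) ^ (k + 2) * (j * (rcfChain hα hk).t 1 - i * (rcfChain hα hk).t 0) := by
  obtain ⟨i, j, hN, hm⟩ := exists_rcf_coords hα (k + 2) N m
  have hN_cast := congrArg (Int.cast (R := ℝ)) hN
  push_cast at hN_cast
  exact ⟨i, j, hN_cast, hm⟩

/-- The point `γ` is chosen so that doubling the coordinates of `(N, N * α - γ - m)` with respect
to levels `0` and `1` of `rcfChain` gives a grid point of the cell centred at `(d 0, e 0)`. -/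
theorem exists_forall_cellConst_le_or_abs_le (hα : Irrational α) (h : ∀ᶠ n in atTop, rcfA α n ≠ 1) :
    ∃ γ C : ℝ, ∀ N m : ℤ, N * α - γ - m ≠ 0 ∧
      (cellConst / 4 ≤ |N * (N * α - γ - m)| ∨ |(N : ℝ)| ≤ C * |N * α - γ - m|) := by
  obtain ⟨k, hk⟩ := eventually_atTop.1 h
  set S := rcfChain hα hk
  obtain ⟨r, hr⟩ := exists_two_mul_eq_rcfChain hα hk
  obtain ⟨C, hC, hC'⟩ := S.exists_ratio_bounds 0
  set σ : ℝ := (-1) ^ (k + 2) with hσ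
  have hσσ : σ * σ = 1 := pow_mul_pow_eq_one _ (by norm_num)
  refine ⟨r * α + σ * (S.t 0 - S.t 1 + S.e 0) / 2, C, fun N m => ?_⟩
  set Z := N * α - (r * α + σ * (S.t 0 - S.t 1 + S.e 0) / 2) - m with hZ
  obtain ⟨i, j, hN, hm⟩ := exists_rcfChain_coords hα hk (N - r) m
  push_cast at hN hm
  have hX : ((2 * i + 1 : ℤ) : ℝ) * S.q 0 + (2 * j + 1 : ℤ) * S.q 1 + S.d 0 = 2 * N := by
    push_cast
    linear_combination -2 * hN - hr
  have hY : ((2 * i + 1 : ℤ) : ℝ) * S.t 0 - (2 * j + 1 : ℤ) * S.t 1 + S.e 0 = -σ * (2 * Z) := by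
    push_cast
    linear_combination 2 * σ * hZ + 2 * σ * hm
      + (2 * j * S.t 1 - 2 * i * S.t 0 - S.t 0 + S.t 1 - S.e 0) * hσσ
  have hcell := (S.isCentre_d_e 0).cellConst_le_or_abs_le_mul hC hC'
    (odd_two_mul_add_one i) (odd_two_mul_add_one j)
  rw [hX, hY] at hcell
  have hY_abs : |-σ * (2 * Z)| = 2 * |Z| := by
    rw [abs_mul, abs_neg, hσ, abs_neg_one_pow, one_mul, abs_mul, abs_two]
  rw [abs_mul, hY_abs, abs_mul, abs_two] at hcell
  rw [abs_mul]
  rcases hcell with hc | ⟨hZ₀, hle⟩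
  · refine ⟨fun h₀ => ?_, Or.inl (by linarith)⟩
    rw [h₀, abs_zero, mul_zero, mul_zero] at hc
    exact cellConst_pos.not_ge hc
  · exact ⟨right_ne_zero_of_mul (right_ne_zero_of_mul hZ₀), Or.inr (by linarith)⟩

end Shift

/-- If the regular continued fraction expansion of the irrational `α` has only finitely
many partial quotients equal to `1`, then `ρ(α) ≥ 1/(2√13+8)`. -/
theorem stmt5 (α : ℝ) (hirr : Irrational α)
    (h : ∀ᶠ n in Filter.atTop, rcfA α n ≠ 1) :
    rho α ≥ 1 / (2 * Real.sqrt 13 + 8) := by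
  obtain ⟨γ, C, hγ⟩ := exists_forall_cellConst_le_or_abs_le hirr h
  have hγ_notMem : ¬∃ p q : ℤ, γ = (p : ℝ) + (q : ℝ) * α := by
    rintro ⟨p, q, rfl⟩
    exact (hγ q (-p)).1 (by push_cast; ring)
  calc 1 / (2 * √13 + 8) = cellConst / 4 := by unfold cellConst; ring
    _ ≤ Mval α γ := le_Mval hirr fun N m => (hγ N m).2
    _ ≤ rho α := by
      refine le_csSup ⟨3, ?_⟩ ⟨γ, hγ_notMem, rfl⟩
      rintro _ ⟨γ', -, rfl⟩
      exact Mval_le hirr γ'
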